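/- The Split-AI privacy guarantee holds even in the stronger worst-case game in which the adversary chooses the challenge index: for every dataset x : Fin (2n) → 𝒳, every training map train, every FIXED index i ∈ Fin (2n), and every adversary A : Fin (2n) × (Fin k → ℝ) → PMF Bool, the probability (over the membership vector b, the non-model index sets Id_non, the choice i', and A's internal randomness) that A(i, r_i) outputs b i is exactly 1/2. -/

import Mathlib

/-!
Statement 1: The Split-AI privacy guarantee in the stronger worst-case game where the
adversary chooses the challenge index: for every fixed index `i`, every adversary's
success probability is exactly 1/2.
-/

open scoped BigOperators

noncomputable section

/-- Boolean vectors of length `2n` with Hamming weight exactly `n`. -/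
def weightVectors (n : ℕ) : Finset (Fin (2 * n) → Bool) :=
  Finset.univ.filter (fun b => (Finset.univ.filter (fun i => b i = true)).card = n)

lemma weightVectors_nonempty (n : ℕ) : (weightVectors n).Nonempty := by
  obtain ⟨S, -, hS⟩ :=
    Finset.exists_subset_card_eq
      (show n ≤ (Finset.univ : Finset (Fin (2 * n))).card by simp; omega)
  refine ⟨fun i => decide (i ∈ S), ?_⟩
  simp only [weightVectors, Finset.mem_filter, Finset.mem_univ, true_and]
  have h : Finset.univ.filter (fun i : Fin (2 * n) => decide (i ∈ S) = true) = S := by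
    ext i; simp
  rw [h, hS]

/-- The member set `S = {i : b i = true}`. -/
def memberSet {n : ℕ} (b : Fin (2 * n) → Bool) : Finset (Fin (2 * n)) :=
  Finset.univ.filter (fun i => b i = true)

/-- Assignments of an `L`-element subset of `Fin K` (the non-model indices) to
each index of the dataset. -/
def idnonFuns (n K L : ℕ) : Finset (Fin (2 * n) → Finset (Fin K)) :=
  Finset.univ.filter (fun f => ∀ i, (f i).card = L)

lemma idnonFuns_nonempty (n K L : ℕ) (hLK : L ≤ K) : (idnonFuns n K L).Nonempty := by
  obtain ⟨T, -, hT⟩ :=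
    Finset.exists_subset_card_eq
      (show L ≤ (Finset.univ : Finset (Fin K)).card by simpa using hLK)
  exact ⟨fun _ => T, by simp [idnonFuns, hT]⟩

/-- Uniform distribution on a finset, with a default value if the finset is empty. -/
def uniformOn' {α : Type*} (s : Finset α) (d : α) : PMF α :=
  if h : s.Nonempty then PMF.uniformOfFinset s h else PMF.pure d

/-- The sub-model `F_m`, trained (via `train`) on the data points of the members `j`
with `m ∉ Id_non(j)`. -/
def subModel {n K k : ℕ} {𝒳 : Type*} [DecidableEq 𝒳]
    (x : Fin (2 * n) → 𝒳) (train : Finset 𝒳 → 𝒳 → Fin k → ℝ)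
    (b : Fin (2 * n) → Bool) (Idnon : Fin (2 * n) → Finset (Fin K)) (m : Fin K) :
    𝒳 → Fin k → ℝ :=
  train (((memberSet b).filter (fun j => m ∉ Idnon j)).image x)

/-- The Split-AI answer `r_i` on the query at index `i`: the average of the `L`
sub-models with indices in `Id_non(i)` if `i` is a member, and in `Id_non(i')`
otherwise. -/
def splitAIAnswer {n K k : ℕ} (L : ℕ) {𝒳 : Type*} [DecidableEq 𝒳]
    (x : Fin (2 * n) → 𝒳) (train : Finset 𝒳 → 𝒳 → Fin k → ℝ)
    (b : Fin (2 * n) → Bool) (Idnon : Fin (2 * n) → Finset (Fin K))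
    (i' i : Fin (2 * n)) : Fin k → ℝ :=
  fun c =>
    if b i then (L : ℝ)⁻¹ * ∑ m ∈ Idnon i, subModel x train b Idnon m (x i) c
    else (L : ℝ)⁻¹ * ∑ m ∈ Idnon i', subModel x train b Idnon m (x i) c

/-- The Split-AI membership-inference game at a fixed (adversarially chosen) challenge
index `i`: sample the membership vector `b` uniformly from the weight-`n` vectors, the
non-model index sets `Id_non` uniformly and independently, and `i'` uniformly from the
member set; give `(i, r_i)` to the adversary `A`, and output whether `A`'s guess
equals `b i`. -/
def splitAIGameAt {n K L k : ℕ} (hn : 0 < n) (hLK : L ≤ K) {𝒳 : Type*} [DecidableEq 𝒳]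
    (x : Fin (2 * n) → 𝒳) (train : Finset 𝒳 → 𝒳 → Fin k → ℝ)
    (A : Fin (2 * n) × (Fin k → ℝ) → PMF Bool) (i : Fin (2 * n)) : PMF Bool :=
  have h2n : 0 < 2 * n := by omega
  (PMF.uniformOfFinset (weightVectors n) (weightVectors_nonempty n)).bind fun b =>
    (PMF.uniformOfFinset (idnonFuns n K L) (idnonFuns_nonempty n K L hLK)).bind fun Idnon =>
      (uniformOn' (memberSet b) ⟨0, h2n⟩).bind fun i' =>
        (A (i, splitAIAnswer L x train b Idnon i' i)).map fun c => decide (c = b i)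

/-!
Pair the challenge index `i` with a uniformly random index `j` of the opposite membership. When `i`
is a non-member this is how the game draws `i'`; when `i` is a member the answer ignores `i'`, so
the draw may be replaced. Exchanging the roles of `i` and `j` in both `b` and `Id_non` is a
measure-preserving involution which flips `b i`. It does not change the answer: whichever of
`i`, `j` is the member, the same `L` sub-models are queried, and none of them was trained on it.
Hence the adversary is right exactly as often as it is wrong.
-/

open Equiv (swap)

section Uniform

variable {α β γ : Type*}

lemma uniformOfFinset_bind_apply (s : Finset α) (hs : s.Nonempty) (F : α → PMF γ) (c : γ) :
    (PMF.uniformOfFinset s hs).bind F c = (s.card : ENNReal)⁻¹ * ∑ a ∈ s, F a c := by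
  have eq_zero_of_notMem : ∀ a ∉ s, PMF.uniformOfFinset s hs a * F a c = 0 := fun a ha => by
    rw [PMF.uniformOfFinset_apply_of_notMem hs ha, zero_mul]
  rw [PMF.bind_apply, tsum_eq_sum eq_zero_of_notMem, Finset.mul_sum]
  exact Finset.sum_congr rfl fun a ha => by rw [PMF.uniformOfFinset_apply_of_mem hs ha]

lemma uniformOn'_bind_apply {s : Finset α} (hs : s.Nonempty) (d : α) (F : α → PMF γ) (c : γ) :
    (uniformOn' s d).bind F c = (s.card : ENNReal)⁻¹ * ∑ a ∈ s, F a c := by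
  rw [uniformOn', dif_pos hs, uniformOfFinset_bind_apply]

lemma uniformOfFinset_bind_comp_involutive (s : Finset α) (hs : s.Nonempty) {τ : α → α}
    (hτ : Function.Involutive τ) (hτs : ∀ a ∈ s, τ a ∈ s) (F : α → PMF γ) :
    ((PMF.uniformOfFinset s hs).bind fun a => F (τ a)) = (PMF.uniformOfFinset s hs).bind F := by
  ext c
  simp only [uniformOfFinset_bind_apply]
  congr 1
  exact Finset.sum_nbij' τ τ hτs hτs (fun a _ => hτ a) (fun a _ => hτ a) fun _ _ => rfl

/-- Fibres of constant size make the two-stage draw of `(a, j)` uniform on the pairs, hence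
invariant under the involution `(a, j) ↦ (τ j a, j)`. -/
lemma uniformOfFinset_bind_uniformOn'_congr_of_involutive {m : ℕ} (hm : 0 < m)
    (s : Finset α) (hs : s.Nonempty) (t : α → Finset β) (d : β) (ht : ∀ a ∈ s, (t a).card = m)
    {τ : β → α → α} (hτ : ∀ j, Function.Involutive (τ j))
    (hτs : ∀ a ∈ s, ∀ j ∈ t a, τ j a ∈ s) (hτt : ∀ a ∈ s, ∀ j ∈ t a, j ∈ t (τ j a))
    {F G : α → β → PMF γ} (hFG : ∀ a ∈ s, ∀ j ∈ t a, F (τ j a) j = G a j) :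
    ((PMF.uniformOfFinset s hs).bind fun a => (uniformOn' (t a) d).bind (F a)) =
      (PMF.uniformOfFinset s hs).bind fun a => (uniformOn' (t a) d).bind (G a) := by
  have two_stage_apply (H : α → β → PMF γ) (c : γ) :
      ((PMF.uniformOfFinset s hs).bind fun a => (uniformOn' (t a) d).bind (H a)) c =
        (s.card : ENNReal)⁻¹ * ((m : ENNReal)⁻¹ * ∑ p ∈ s.sigma t, H p.1 p.2 c) := by
    rw [uniformOfFinset_bind_apply, Finset.sum_sigma, Finset.mul_sum s _ (m : ENNReal)⁻¹]
    refine congrArg _ (Finset.sum_congr rfl fun a ha => ?_)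
    rw [uniformOn'_bind_apply (Finset.card_pos.mp (by rwa [ht a ha])), ht a ha]
  have maps_pairs : ∀ p ∈ s.sigma t, (⟨τ p.2 p.1, p.2⟩ : (_ : α) × β) ∈ s.sigma t := by
    rintro ⟨a, j⟩ h
    obtain ⟨ha, hj⟩ := Finset.mem_sigma.mp h
    exact Finset.mem_sigma.mpr ⟨hτs a ha j hj, hτt a ha j hj⟩
  have involutive_pairs (p : (_ : α) × β) :
      (⟨τ p.2 (τ p.2 p.1), p.2⟩ : (_ : α) × β) = p := by
    rw [hτ p.2 p.1]
  ext c
  rw [two_stage_apply F, two_stage_apply G]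
  congr 2
  refine (Finset.sum_nbij' (fun p => ⟨τ p.2 p.1, p.2⟩) (fun p => ⟨τ p.2 p.1, p.2⟩)
    maps_pairs maps_pairs (fun p _ => involutive_pairs p) (fun p _ => involutive_pairs p) ?_).symm
  rintro ⟨a, j⟩ h
  obtain ⟨ha, hj⟩ := Finset.mem_sigma.mp h
  rw [hFG a ha j hj]

end Uniform

lemma apply_true_eq_half_of_map_not_eq {p : PMF Bool} (hp : p.map not = p) : p true = 1 / 2 := by
  have h_swap : p false = p true := by
    conv_lhs => rw [← hp]
    simp [PMF.map_apply]
  have h_sum : p true * 2 = 1 := by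
    simpa only [tsum_fintype, Fintype.sum_bool, h_swap, ← mul_two] using p.tsum_coe
  rw [one_div]
  exact ENNReal.eq_inv_of_mul_eq_one_left h_sum

lemma map_decide_eq_not (p : PMF Bool) (t : Bool) :
    (p.map fun c => decide (c = !t)) = (p.map fun c => decide (c = t)).map not := by
  rw [PMF.map_comp]
  congr 1
  funext c
  cases c <;> cases t <;> rfl

lemma involutive_comp_swap {ι α : Type*} [DecidableEq ι] (i j : ι) :
    Function.Involutive fun g : ι → α => g ∘ swap i j := fun g => by
  funext l
  simp

section Membership

variable {n : ℕ} {b : Fin (2 * n) → Bool}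

/-- The indices whose membership bit differs from that of `i`: the candidates for exchanging
roles with the challenge index. -/
def oppositeSet (b : Fin (2 * n) → Bool) (i : Fin (2 * n)) : Finset (Fin (2 * n)) :=
  Finset.univ.filter fun j => b j = !b i

lemma mem_oppositeSet {i j : Fin (2 * n)} : j ∈ oppositeSet b i ↔ b j = !b i := by
  simp [oppositeSet]

lemma oppositeSet_eq_memberSet {i : Fin (2 * n)} (hi : b i = false) :
    oppositeSet b i = memberSet b := by
  simp [oppositeSet, memberSet, hi]

lemma oppositeSet_eq_compl_memberSet {i : Fin (2 * n)} (hi : b i = true) :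
    oppositeSet b i = (memberSet b)ᶜ := by
  ext j
  simp [oppositeSet, memberSet, hi]

lemma mem_weightVectors : b ∈ weightVectors n ↔ (memberSet b).card = n := by
  simp [weightVectors, memberSet]

lemma card_oppositeSet (hb : b ∈ weightVectors n) (i : Fin (2 * n)) :
    (oppositeSet b i).card = n := by
  rw [mem_weightVectors] at hb
  cases hi : b i with
  | false => rw [oppositeSet_eq_memberSet hi, hb]
  | true =>
    rw [oppositeSet_eq_compl_memberSet hi, Finset.card_compl, Fintype.card_fin, hb]
    omega

lemma comp_perm_mem_weightVectors (hb : b ∈ weightVectors n) (σ : Equiv.Perm (Fin (2 * n))) :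
    b ∘ σ ∈ weightVectors n := by
  rw [mem_weightVectors] at hb ⊢
  exact (Finset.card_equiv σ (by simp [memberSet])).trans hb

lemma mem_oppositeSet_comp_swap {i j : Fin (2 * n)} (hj : j ∈ oppositeSet b i) :
    j ∈ oppositeSet (b ∘ swap i j) i := by
  rw [mem_oppositeSet] at hj ⊢
  simp [hj]

lemma comp_mem_idnonFuns {K L : ℕ} {f : Fin (2 * n) → Finset (Fin K)}
    (hf : f ∈ idnonFuns n K L) (σ : Fin (2 * n) → Fin (2 * n)) : f ∘ σ ∈ idnonFuns n K L := by
  simp only [idnonFuns, Finset.mem_filter_univ] at hf ⊢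
  exact fun i => hf (σ i)

end Membership

section Game

variable {n K L k : ℕ} {𝒳 : Type*} [DecidableEq 𝒳]
  (x : Fin (2 * n) → 𝒳) (train : Finset 𝒳 → 𝒳 → Fin k → ℝ)
  {b : Fin (2 * n) → Bool} {f : Fin (2 * n) → Finset (Fin K)}

lemma subModel_comp_swap {i j : Fin (2 * n)} {m : Fin K}
    (hi : b i = true → m ∈ f i) (hj : b j = true → m ∈ f j) :
    subModel x train (b ∘ swap i j) (f ∘ swap i j) m = subModel x train b f m := by
  suffices h : (memberSet (b ∘ swap i j)).filter (fun l => m ∉ (f ∘ swap i j) l) =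
      (memberSet b).filter fun l => m ∉ f l by
    rw [subModel, subModel, h]
  ext l
  simp only [memberSet, Finset.mem_filter, Finset.mem_univ, true_and, Function.comp_apply]
  rcases eq_or_ne l i with rfl | hli
  · rw [Equiv.swap_apply_left]
    tauto
  rcases eq_or_ne l j with rfl | hlj
  · rw [Equiv.swap_apply_right]
    tauto
  · rw [Equiv.swap_apply_of_ne_of_ne hli hlj]

lemma splitAIAnswer_comp_swap {i j : Fin (2 * n)} (hj : j ∈ oppositeSet b i) :
    splitAIAnswer L x train (b ∘ swap i j) (f ∘ swap i j) j i =
      splitAIAnswer L x train b f j i := by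
  rw [mem_oppositeSet] at hj
  funext c
  cases hi : b i <;> rw [hi] at hj <;>
  · simp only [splitAIAnswer, Function.comp_apply, Equiv.swap_apply_left, Equiv.swap_apply_right,
      hi, hj, Bool.not_false, Bool.not_true, Bool.false_eq_true, if_true, if_false]
    refine congrArg _ (Finset.sum_congr rfl fun m hm => ?_)
    rw [subModel_comp_swap x train (by simp [hi, hm]) (by simp [hj, hm])]

/-- The outcome of the game at `i` once `b`, `Id_non = f` and `i' = j` have been drawn, with only
the adversary's coins left random: `true` if the adversary guesses `b i`. -/
def splitAIOutcome (L : ℕ) (A : Fin (2 * n) × (Fin k → ℝ) → PMF Bool)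
    (b : Fin (2 * n) → Bool) (f : Fin (2 * n) → Finset (Fin K)) (j i : Fin (2 * n)) : PMF Bool :=
  (A (i, splitAIAnswer L x train b f j i)).map fun c => decide (c = b i)

variable (A : Fin (2 * n) × (Fin k → ℝ) → PMF Bool)

lemma splitAIOutcome_comp_swap {i j : Fin (2 * n)} (hj : j ∈ oppositeSet b i) :
    splitAIOutcome x train L A (b ∘ swap i j) (f ∘ swap i j) j i =
      (splitAIOutcome x train L A b f j i).map not := by
  have flip_bit : (b ∘ swap i j) i = !b i := by
    simpa using mem_oppositeSet.mp hj
  rw [splitAIOutcome, splitAIOutcome, splitAIAnswer_comp_swap x train hj, flip_bit,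
    map_decide_eq_not]

lemma splitAIOutcome_eq_of_apply_eq_true {i : Fin (2 * n)} (hi : b i = true) (j j' : Fin (2 * n)) :
    splitAIOutcome x train L A b f j i = splitAIOutcome x train L A b f j' i := by
  have answer_eq : splitAIAnswer L x train b f j i = splitAIAnswer L x train b f j' i := by
    funext c
    simp only [splitAIAnswer, hi, if_true]
  rw [splitAIOutcome, splitAIOutcome, answer_eq]

lemma uniformOn'_memberSet_bind_splitAIOutcome (b : Fin (2 * n) → Bool)
    (f : Fin (2 * n) → Finset (Fin K)) (d i : Fin (2 * n)) :
    ((uniformOn' (memberSet b) d).bind fun j => splitAIOutcome x train L A b f j i) =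
      (uniformOn' (oppositeSet b i) d).bind fun j => splitAIOutcome x train L A b f j i := by
  cases hi : b i with
  | false => rw [oppositeSet_eq_memberSet hi]
  | true =>
    have outcome_const : (fun j => splitAIOutcome x train L A b f j i) =
        fun _ => splitAIOutcome x train L A b f i i :=
      funext fun j => splitAIOutcome_eq_of_apply_eq_true x train A hi j i
    rw [outcome_const, PMF.bind_const, PMF.bind_const]

lemma splitAIGameAt_eq_bind_oppositeSet (hn : 0 < n) (hLK : L ≤ K) (i : Fin (2 * n)) :
    splitAIGameAt hn hLK x train A i =
      (PMF.uniformOfFinset (weightVectors n) (weightVectors_nonempty n)).bind fun b =>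
        (uniformOn' (oppositeSet b i) ⟨0, by omega⟩).bind fun j =>
          (PMF.uniformOfFinset (idnonFuns n K L) (idnonFuns_nonempty n K L hLK)).bind fun f =>
            splitAIOutcome x train L A b f j i := by
  rw [splitAIGameAt]
  refine congrArg _ (funext fun b => ?_)
  rw [PMF.bind_comm (uniformOn' (oppositeSet b i) _)]
  exact congrArg _ (funext fun f => uniformOn'_memberSet_bind_splitAIOutcome x train A b f _ i)

lemma uniformOfFinset_idnonFuns_bind_splitAIOutcome_comp_swap (hLK : L ≤ K)
    {i j : Fin (2 * n)} (hj : j ∈ oppositeSet b i) :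
    ((PMF.uniformOfFinset (idnonFuns n K L) (idnonFuns_nonempty n K L hLK)).bind fun f =>
        splitAIOutcome x train L A (b ∘ swap i j) f j i) =
      ((PMF.uniformOfFinset (idnonFuns n K L) (idnonFuns_nonempty n K L hLK)).bind fun f =>
        splitAIOutcome x train L A b f j i).map not := by
  rw [← uniformOfFinset_bind_comp_involutive _ _ (involutive_comp_swap i j)
    (fun f hf => comp_mem_idnonFuns hf _), PMF.map_bind]
  exact congrArg _ (funext fun f => splitAIOutcome_comp_swap x train A hj)

lemma splitAIGameAt_map_not (hn : 0 < n) (hLK : L ≤ K) (i : Fin (2 * n)) :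
    (splitAIGameAt hn hLK x train A i).map not = splitAIGameAt hn hLK x train A i := by
  rw [splitAIGameAt_eq_bind_oppositeSet]
  simp only [PMF.map_bind (f := not)]
  symm
  exact uniformOfFinset_bind_uniformOn'_congr_of_involutive hn _ _ _ _
    (fun b hb => card_oppositeSet hb i)
    (involutive_comp_swap i)
    (fun b hb j _ => comp_perm_mem_weightVectors hb (swap i j))
    (fun b _ j hj => mem_oppositeSet_comp_swap hj)
    (fun b _ j hj => by
      rw [uniformOfFinset_idnonFuns_bind_splitAIOutcome_comp_swap x train A hLK hj,
        PMF.map_bind])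

end Game

/-- even for a worst-case, adversarially chosen challenge index `i`,
the success probability of any direct single-query membership-inference adversary
against Split-AI is exactly `1/2`. -/
theorem splitAI_SQMI_worstCase_eq_half
    (n K L k : ℕ) (hn : 0 < n) (hL : 1 ≤ L) (hLK : L ≤ K)
    {𝒳 : Type*} [DecidableEq 𝒳]
    (x : Fin (2 * n) → 𝒳) (train : Finset 𝒳 → 𝒳 → Fin k → ℝ)
    (A : Fin (2 * n) × (Fin k → ℝ) → PMF Bool) (i : Fin (2 * n)) :
    splitAIGameAt hn hLK x train A i true = 1 / 2 :=
  apply_true_eq_half_of_map_not_eq (splitAIGameAt_map_not x train A hn hLK i)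

end
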